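/- arXiv:1509.01768 — 7 statements merged into one kernel-verified Lean document; each statement's English description precedes it below -/
import Mathlib

section
/- Let r₁₀ := arctan(√((4/√3)·cos((1/3)·arctan(√687/9)) + 3)). Then x := tan²(r₁₀) satisfies the cubic equation x³ − 9x² + 23x − 16 = 0. -/
open Real

/-! Substituting `x = t + 3` turns the cubic into the depressed cubic `t³ - 4t - 1 = 0`. Its three
roots are real, and the largest is given by Viète's trigonometric formula: for
`t = 2 √(p / 3) cos (φ / 3)`, the triple angle formula turns `t³ - pt - q = 0` into a condition on
`cos φ`. For `p = 4` and `q = 1` the discriminant `4p³ - 27q²` is `229`, and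
`√(229 / 27) = √687 / 9`. -/

theorem two_mul_cos_div_three_pow_three (r φ : ℝ) :
    (2 * r * cos (φ / 3)) ^ 3 = 3 * r ^ 2 * (2 * r * cos (φ / 3)) + 2 * r ^ 3 * cos φ := by
  have triple : cos φ = 4 * cos (φ / 3) ^ 3 - 3 * cos (φ / 3) := by
    rw [← cos_three_mul, mul_div_cancel₀ φ three_ne_zero]
  rw [triple]
  ring

theorem cos_arctan_sqrt_sub_sq_div {a b : ℝ} (hb : 0 < b) (hba : b ≤ a) :
    cos (arctan (√(a ^ 2 - b ^ 2) / b)) = b / a := by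
  have ha : 0 < a := hb.trans_le hba
  have ratio : √(a ^ 2 - b ^ 2) / b = √(1 - (b / a) ^ 2) / (b / a) := by
    rw [div_pow, one_sub_div (pow_ne_zero 2 ha.ne'), sqrt_div' _ (sq_nonneg a), sqrt_sq ha.le,
      div_div_div_cancel_right₀ ha.ne']
  rw [ratio, ← arccos_eq_arctan (div_pos hb ha)]
  exact cos_arccos (neg_one_lt_zero.le.trans (div_pos hb ha).le) (div_le_one_of_le₀ hba ha.le)

theorem viete_root_depressed_cubic {p q t : ℝ} (hq : 0 < q) (hdisc : 27 * q ^ 2 ≤ 4 * p ^ 3)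
    (ht : t = 2 * √(p / 3) * cos (arctan (√((4 * p ^ 3 - 27 * q ^ 2) / 27) / q) / 3)) :
    t ^ 3 - p * t - q = 0 := by
  have hp : 0 < p := (Odd.pow_pos_iff (by decide : Odd 3)).1 (by linarith [pow_pos hq 2])
  have a_pos : 0 < 2 * √(p / 3) ^ 3 := by positivity
  have sq_r : √(p / 3) ^ 2 = p / 3 := sq_sqrt (by positivity)
  set r := √(p / 3)
  set a := 2 * r ^ 3
  have sq_a : a ^ 2 = 4 * p ^ 3 / 27 :=
    calc a ^ 2 = 4 * (r ^ 2) ^ 3 := by ring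
      _ = 4 * p ^ 3 / 27 := by rw [sq_r]; ring
  have q_le_a : q ≤ a := le_of_sq_le_sq (by linarith) a_pos.le
  have radicand : (4 * p ^ 3 - 27 * q ^ 2) / 27 = a ^ 2 - q ^ 2 := by
    rw [sq_a]
    ring
  rw [radicand] at ht
  have cubic : t ^ 3 = p * t + q :=
    calc t ^ 3 = 3 * r ^ 2 * t + a * cos (arctan (√(a ^ 2 - q ^ 2) / q)) := by
          rw [ht, two_mul_cos_div_three_pow_three]
      _ = 3 * (p / 3) * t + a * (q / a) := by rw [sq_r, cos_arctan_sqrt_sub_sq_div hq q_le_a]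
      _ = p * t + q := by rw [mul_div_cancel₀ p three_ne_zero, mul_div_cancel₀ q a_pos.ne']
  linarith

theorem cos_mul_arctan_pos {c : ℝ} (hc : |c| ≤ 1) (u : ℝ) : 0 < cos (c * arctan u) := by
  have arctan_lt : |arctan u| < π / 2 :=
    abs_lt.2 ⟨neg_pi_div_two_lt_arctan u, arctan_lt_pi_div_two u⟩
  have angle_lt : |c * arctan u| < π / 2 :=
    calc |c * arctan u| = |c| * |arctan u| := abs_mul c _
      _ ≤ |arctan u| := mul_le_of_le_one_left (abs_nonneg _) hc
      _ < π / 2 := arctan_lt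
  exact cos_pos_of_mem_Ioo (abs_lt.1 angle_lt)

/-- With `r₁₀ = arctan(√((4/√3)·cos((1/3)·arctan(√687/9)) + 3))`, the number
`x = tan²(r₁₀)` satisfies the cubic equation `x³ − 9x² + 23x − 16 = 0`. -/
theorem stmt_2 :
    let r₁₀ : ℝ := Real.arctan (Real.sqrt
      (4 / Real.sqrt 3 * Real.cos ((1 / 3) * Real.arctan (Real.sqrt 687 / 9)) + 3))
    let x : ℝ := Real.tan r₁₀ ^ 2
    x ^ 3 - 9 * x ^ 2 + 23 * x - 16 = 0 := by
  intro r₁₀ x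
  set t : ℝ := 4 / √3 * cos (1 / 3 * arctan (√687 / 9))
  have t_pos : 0 < t := mul_pos (by positivity) (cos_mul_arctan_pos (by norm_num [abs_le]) _)
  have x_eq : x = t + 3 := by
    rw [show x = tan (arctan √(t + 3)) ^ 2 from rfl, tan_arctan, sq_sqrt (by positivity)]
  have amplitude : 2 * √(4 / 3) = 4 / √3 := by
    rw [sqrt_div (by norm_num), show (4 : ℝ) = 2 ^ 2 by norm_num, sqrt_sq zero_le_two]
    ring
  have tangent : √((4 * 4 ^ 3 - 27 * 1 ^ 2) / 27) / 1 = √687 / 9 := by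
    rw [div_one, show ((4 * 4 ^ 3 - 27 * 1 ^ 2) / 27 : ℝ) = 687 / 9 ^ 2 by norm_num,
      sqrt_div' _ (by positivity), sqrt_sq (by norm_num)]
  have depressed : t ^ 3 - 4 * t - 1 = 0 := by
    refine viete_root_depressed_cubic one_pos (by norm_num) ?_
    rw [amplitude, tangent, ← one_div_mul_eq_div 3]
  rw [x_eq]
  linear_combination depressed
end

section
/- Let r₁₀ := arctan(√((4/√3)·cos((1/3)·arctan(√687/9)) + 3)). Then 1.154479 < r₁₀ < 1.154480; that is, r₁₀ lies in the interval [1.154479, 1.154480] obtained numerically by Danzer for the Tammes problem with N = 10. -/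
open Real

/-!
Put `y = (4/√3)·cos(θ/3)` with `θ = arctan(√687/9)`. As `cos θ = 9/(16√3)`, the triple angle formula
(Viète's trigonometric solution of a cubic with three real roots) gives `y³ - 4y = 1`, and `y` is
the root lying where `x³ - 4x` is increasing, so comparing values of this cubic locates `y`. From
`sec² r₁₀ = 1 + tan² r₁₀ = y + 4`, an inequality between `r₁₀` and a number `a` then amounts to a
numerical one for `cos a`, which partial sums of the cosine series decide.
-/

section CosSeries

open Filter Finset Topology Nat

variable {x : ℝ}

theorem antitone_pow_two_mul_div_factorial (hx : x ^ 2 ≤ 2) :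
    Antitone fun n : ℕ ↦ x ^ (2 * n) / (2 * n)! := by
  refine antitone_nat_of_succ_le fun n ↦ ?_
  have hfactorial : ((2 * (n + 1))! : ℝ) = (2 * n + 2) * (2 * n + 1) * (2 * n)! := by
    rw [show 2 * (n + 1) = 2 * n + 1 + 1 by ring, factorial_succ, factorial_succ]
    push_cast
    ring
  have hratio : x ^ 2 ≤ (2 * n + 2) * (2 * n + 1) := by
    nlinarith [(Nat.cast_nonneg n : (0 : ℝ) ≤ n)]
  have hpow : 0 ≤ x ^ (2 * n) := (even_two_mul n).pow_nonneg x
  rw [hfactorial, div_le_div_iff₀ (by positivity) (by positivity), mul_add_one, pow_add]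
  calc x ^ (2 * n) * x ^ 2 * (2 * n)!
      ≤ x ^ (2 * n) * ((2 * n + 2) * (2 * n + 1)) * (2 * n)! := by gcongr
    _ = x ^ (2 * n) * ((2 * n + 2) * (2 * n + 1) * (2 * n)!) := by ring

theorem tendsto_sum_alternating_cos (x : ℝ) :
    Tendsto (fun n ↦ ∑ i ∈ range n, (-1) ^ i * (x ^ (2 * i) / (2 * i)!)) atTop (𝓝 (cos x)) := by
  simpa only [mul_div_assoc] using (Real.hasSum_cos x).tendsto_sum_nat

theorem sum_range_two_mul_le_cos (hx : x ^ 2 ≤ 2) (k : ℕ) :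
    ∑ i ∈ range (2 * k), (-1) ^ i * (x ^ (2 * i) / (2 * i)!) ≤ cos x :=
  (antitone_pow_two_mul_div_factorial hx).alternating_series_le_tendsto
    (tendsto_sum_alternating_cos x) k

theorem cos_le_sum_range_two_mul_add_one (hx : x ^ 2 ≤ 2) (k : ℕ) :
    cos x ≤ ∑ i ∈ range (2 * k + 1), (-1) ^ i * (x ^ (2 * i) / (2 * i)!) :=
  (antitone_pow_two_mul_div_factorial hx).tendsto_le_alternating_series
    (tendsto_sum_alternating_cos x) k

theorem lt_cos_danzer_lower : 0.404395 < cos 1.154479 :=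
  lt_of_lt_of_le (by norm_num [sum_range_succ, factorial])
    (sum_range_two_mul_le_cos (by norm_num) 3)

theorem cos_danzer_upper_lt : cos 1.154480 < 0.4043942 :=
  lt_of_le_of_lt (cos_le_sum_range_two_mul_add_one (by norm_num) 3)
    (by norm_num [sum_range_succ, factorial])

end CosSeries

section ArctanSqrt

variable {a s : ℝ}

theorem lt_arctan_sqrt_iff (ha₀ : 0 ≤ a) (ha : a < π / 2) :
    a < arctan √s ↔ 1 < (1 + s) * cos a ^ 2 := by
  have hcos : 0 < cos a := cos_pos_of_mem_Ioo ⟨by linarith [pi_pos], ha⟩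
  calc a < arctan √s
      ↔ arctan (tan a) < arctan √s := by rw [arctan_tan (by linarith [pi_pos]) ha]
    _ ↔ tan a ^ 2 < s := by
      rw [arctan_lt_arctan_iff, lt_sqrt (tan_nonneg_of_nonneg_of_le_pi_div_two ha₀ ha.le)]
    _ ↔ (1 + tan a ^ 2) * cos a ^ 2 < (1 + s) * cos a ^ 2 := by
      rw [mul_lt_mul_iff_left₀ (by positivity), add_lt_add_iff_left]
    _ ↔ 1 < (1 + s) * cos a ^ 2 := by rw [one_add_tan_sq_mul_cos_sq_eq_one hcos.ne']

theorem arctan_sqrt_lt_iff (ha₀ : 0 < a) (ha : a < π / 2) :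
    arctan √s < a ↔ (1 + s) * cos a ^ 2 < 1 := by
  have hcos : 0 < cos a := cos_pos_of_mem_Ioo ⟨by linarith, ha⟩
  calc arctan √s < a
      ↔ arctan √s < arctan (tan a) := by rw [arctan_tan (by linarith) ha]
    _ ↔ s < tan a ^ 2 := by
      rw [arctan_lt_arctan_iff, sqrt_lt' (tan_pos_of_pos_of_lt_pi_div_two ha₀ ha)]
    _ ↔ (1 + s) * cos a ^ 2 < (1 + tan a ^ 2) * cos a ^ 2 := by
      rw [mul_lt_mul_iff_left₀ (by positivity), add_lt_add_iff_left]
    _ ↔ (1 + s) * cos a ^ 2 < 1 := by rw [one_add_tan_sq_mul_cos_sq_eq_one hcos.ne']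

end ArctanSqrt

section Cubic

variable {ρ : ℝ}

theorem two_mul_cos_div_three_cube_sub (ρ θ : ℝ) :
    (2 * ρ * cos (θ / 3)) ^ 3 - 3 * ρ ^ 2 * (2 * ρ * cos (θ / 3)) = 2 * ρ ^ 3 * cos θ := by
  have htriple : cos θ = 4 * cos (θ / 3) ^ 3 - 3 * cos (θ / 3) := by
    rw [← cos_three_mul, mul_div_cancel₀ θ three_ne_zero]
  rw [htriple]
  ring

theorem le_two_mul_cos_div_three (hρ : 0 ≤ ρ) {θ : ℝ} (hθ : |θ| ≤ π) :
    ρ ≤ 2 * ρ * cos (θ / 3) := by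
  have hcos : 1 / 2 ≤ cos (θ / 3) := by
    rw [← cos_pi_div_three, ← cos_abs (θ / 3), abs_div, abs_of_pos (zero_lt_three' ℝ)]
    exact cos_le_cos_of_nonneg_of_le_pi (by positivity) (by linarith [pi_pos]) (by gcongr)
  nlinarith

theorem strictMonoOn_cube_sub (hρ : 0 ≤ ρ) :
    StrictMonoOn (fun x ↦ x ^ 3 - 3 * ρ ^ 2 * x) (Set.Ici ρ) := by
  intro x (hx : ρ ≤ x) y (hy : ρ ≤ y) hxy
  have hfactor : 0 < y ^ 2 + x * y + x ^ 2 - 3 * ρ ^ 2 := by nlinarith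
  have hdiff : y ^ 3 - 3 * ρ ^ 2 * y - (x ^ 3 - 3 * ρ ^ 2 * x) =
      (y - x) * (y ^ 2 + x * y + x ^ 2 - 3 * ρ ^ 2) := by ring
  exact sub_pos.1 (hdiff ▸ mul_pos (sub_pos.2 hxy) hfactor)

end Cubic

/-- The number `(4/√3)·cos(θ/3)`, `θ = arctan(√687/9)`, occurring in `r₁₀`: the largest root of
`y³ - 4y - 1`, in Viète's trigonometric form. -/
noncomputable def tammesRoot : ℝ := 4 / √3 * cos ((1 / 3) * arctan (√687 / 9))

theorem tammesRoot_eq_two_mul_cos_div_three :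
    tammesRoot = 2 * (2 / √3) * cos (arctan (√687 / 9) / 3) := by
  rw [tammesRoot, one_div_mul_eq_div]
  ring

theorem cos_arctan_sqrt_687_div_nine : cos (arctan (√687 / 9)) = 9 / (16 * √3) := by
  have hsqrt : √(1 + (√687 / 9) ^ 2) = 16 * √3 / 9 := by
    rw [sqrt_eq_iff_mul_self_eq_of_pos (by positivity)]
    ring_nf
    norm_num
  rw [cos_arctan, hsqrt, one_div_div]

theorem three_mul_two_div_sqrt_three_sq : 3 * (2 / √3) ^ 2 = 4 := by
  rw [div_pow, sq_sqrt zero_le_three]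
  norm_num

theorem tammesRoot_cube_sub : tammesRoot ^ 3 - 4 * tammesRoot = 1 := by
  have hvalue : 2 * (2 / √3) ^ 3 * cos (arctan (√687 / 9)) = 1 := by
    rw [cos_arctan_sqrt_687_div_nine]
    linear_combination (3 * (2 / √3) ^ 2 + 4) / 16 * three_mul_two_div_sqrt_three_sq
  rw [← three_mul_two_div_sqrt_three_sq, tammesRoot_eq_two_mul_cos_div_three,
    two_mul_cos_div_three_cube_sub, hvalue]

theorem two_div_sqrt_three_le_tammesRoot : 2 / √3 ≤ tammesRoot := by
  rw [tammesRoot_eq_two_mul_cos_div_three]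
  refine le_two_mul_cos_div_three (by positivity) (abs_le.2 ⟨?_, ?_⟩)
  · linarith [neg_pi_div_two_lt_arctan (√687 / 9), pi_pos]
  · linarith [arctan_lt_pi_div_two (√687 / 9), pi_pos]

theorem strictMonoOn_cube_sub_four_mul :
    StrictMonoOn (fun x : ℝ ↦ x ^ 3 - 4 * x) (Set.Ici (2 / √3)) :=
  three_mul_two_div_sqrt_three_sq ▸ strictMonoOn_cube_sub (by positivity)

theorem tammesRoot_mem_Ioo : tammesRoot ∈ Set.Ioo 2.1149 2.11491 := by
  have hle : ∀ {x : ℝ}, 2 ≤ x → 2 / √3 ≤ x := fun hx ↦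
    (div_le_self zero_le_two (one_le_sqrt.2 (by norm_num))).trans hx
  constructor
  · rw [← strictMonoOn_cube_sub_four_mul.lt_iff_lt (hle (by norm_num))
      two_div_sqrt_three_le_tammesRoot, tammesRoot_cube_sub]
    norm_num
  · rw [← strictMonoOn_cube_sub_four_mul.lt_iff_lt two_div_sqrt_three_le_tammesRoot
      (hle (by norm_num)), tammesRoot_cube_sub]
    norm_num

/-- With `r₁₀ = arctan(√((4/√3)·cos((1/3)·arctan(√687/9)) + 3))`, one has
`1.154479 < r₁₀ < 1.154480`, i.e. `r₁₀` lies in Danzer's numerical interval for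
the Tammes problem with `N = 10`. -/
theorem stmt_3 :
    let r₁₀ : ℝ := Real.arctan (Real.sqrt
      (4 / Real.sqrt 3 * Real.cos ((1 / 3) * Real.arctan (Real.sqrt 687 / 9)) + 3))
    1.154479 < r₁₀ ∧ r₁₀ < 1.154480 := by
  change 1.154479 < arctan √(tammesRoot + 3) ∧ arctan √(tammesRoot + 3) < 1.154480
  obtain ⟨hlower, hupper⟩ := tammesRoot_mem_Ioo
  have hcos_pos : 0 < cos 1.154480 := cos_pos_of_mem_Ioo (by constructor <;> linarith [pi_gt_three])
  rw [lt_arctan_sqrt_iff (by norm_num) (by linarith [pi_gt_three]),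
    arctan_sqrt_lt_iff (by norm_num) (by linarith [pi_gt_three])]
  constructor
  · calc (1 : ℝ) < (1 + (2.1149 + 3)) * 0.404395 ^ 2 := by norm_num
      _ < (1 + (tammesRoot + 3)) * cos 1.154479 ^ 2 := by
        gcongr
        exact lt_cos_danzer_lower
  · calc (1 + (tammesRoot + 3)) * cos 1.154480 ^ 2
        < (1 + (2.11491 + 3)) * 0.4043942 ^ 2 := by
          gcongr
          exact cos_danzer_upper_lt
      _ < 1 := by norm_num
end

section
/- For every real r with 0 < r < π/2, the following identity holds: cos²r + sin²r · cos( arccos(cos r/(1 + cos r)) + arccos((cos r − 1)/(cos r + 1)) ) = (3cos³r + 2cos²r − cos r − 2(1 − cos²r)·√(cos r + 2cos²r)) / (1 + cos r)². (This computes, via the spherical cosine theorem, the cosine of the base s of a spherical isosceles triangle with legs of length r whose apex angle is the sum of the inner angle arccos(cos r/(1 + cos r)) of a spherical equilateral triangle of side r and the inner angle arccos((cos r − 1)/(cos r + 1)) of a spherical square of side r.) -/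
open Real

theorem sin_arccos_div_one_add_self {c : ℝ} (hc : -1 < c) :
    sin (arccos (c / (1 + c))) = √(1 + 2 * c) / (1 + c) := by
  have one_add_pos : 0 < 1 + c := by linarith
  have one_sub_sq : 1 - (c / (1 + c)) ^ 2 = (1 + 2 * c) / (1 + c) ^ 2 := by
    field_simp
    ring
  rw [sin_arccos, one_sub_sq, sqrt_div' _ (sq_nonneg _), sqrt_sq one_add_pos.le]

theorem sin_arccos_sub_one_div_add_one {c : ℝ} (hc : -1 < c) :
    sin (arccos ((c - 1) / (c + 1))) = 2 * √c / (c + 1) := by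
  have add_one_pos : 0 < c + 1 := by linarith
  have one_sub_sq : 1 - ((c - 1) / (c + 1)) ^ 2 = (2 / (c + 1)) ^ 2 * c := by
    field_simp
    ring
  rw [sin_arccos, one_sub_sq, sqrt_mul (sq_nonneg _), sqrt_sq (by positivity), div_mul_eq_mul_div]

theorem cos_arccos_div_one_add_self {c : ℝ} (hc : -(1 / 2) ≤ c) :
    cos (arccos (c / (1 + c))) = c / (1 + c) := by
  have one_add_pos : 0 < 1 + c := by linarith
  apply cos_arccos
  · rw [le_div_iff₀ one_add_pos]
    linarith
  · rw [div_le_one one_add_pos]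
    linarith

theorem cos_arccos_sub_one_div_add_one {c : ℝ} (hc : 0 ≤ c) :
    cos (arccos ((c - 1) / (c + 1))) = (c - 1) / (c + 1) := by
  have add_one_pos : 0 < c + 1 := by linarith
  apply cos_arccos
  · rw [le_div_iff₀ add_one_pos]
    linarith
  · rw [div_le_one add_one_pos]
    linarith

/-- Here `c` is the cosine of the side length, and the two summands are the inner angles of the
spherical equilateral triangle and of the spherical square. -/
theorem cos_equilateral_angle_add_square_angle {c : ℝ} (hc : 0 ≤ c) :
    cos (arccos (c / (1 + c)) + arccos ((c - 1) / (c + 1))) =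
      (c * (c - 1) - 2 * √(c + 2 * c ^ 2)) / (1 + c) ^ 2 := by
  have sqrt_mul_sqrt : √(1 + 2 * c) * √c = √(c + 2 * c ^ 2) := by
    rw [← sqrt_mul' _ hc]
    ring_nf
  calc cos (arccos (c / (1 + c)) + arccos ((c - 1) / (c + 1)))
      = c / (1 + c) * ((c - 1) / (c + 1)) - √(1 + 2 * c) / (1 + c) * (2 * √c / (c + 1)) := by
        rw [cos_add, cos_arccos_div_one_add_self (by linarith), cos_arccos_sub_one_div_add_one hc,
          sin_arccos_div_one_add_self (by linarith), sin_arccos_sub_one_div_add_one (by linarith)]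
    _ = (c * (c - 1) - 2 * (√(1 + 2 * c) * √c)) / (1 + c) ^ 2 := by
        rw [add_comm c 1]
        field_simp
    _ = (c * (c - 1) - 2 * √(c + 2 * c ^ 2)) / (1 + c) ^ 2 := by rw [sqrt_mul_sqrt]

/-- The spherical-cosine-theorem identity: for `0 < r < π/2`,
`cos²r + sin²r·cos(arccos(cos r/(1+cos r)) + arccos((cos r−1)/(cos r+1)))`
equals `(3cos³r + 2cos²r − cos r − 2(1 − cos²r)√(cos r + 2cos²r))/(1 + cos r)²`. -/
theorem stmt_8 (r : ℝ) (hr : 0 < r) (hr' : r < Real.pi / 2) :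
    Real.cos r ^ 2 + Real.sin r ^ 2 *
        Real.cos (Real.arccos (Real.cos r / (1 + Real.cos r)) +
          Real.arccos ((Real.cos r - 1) / (Real.cos r + 1)))
      = (3 * Real.cos r ^ 3 + 2 * Real.cos r ^ 2 - Real.cos r
          - 2 * (1 - Real.cos r ^ 2) * Real.sqrt (Real.cos r + 2 * Real.cos r ^ 2))
        / (1 + Real.cos r) ^ 2 := by
  have cos_r_pos : 0 < cos r := cos_pos_of_mem_Ioo ⟨by linarith, hr'⟩
  rw [sin_sq, cos_equilateral_angle_add_square_angle cos_r_pos.le]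
  field_simp
  ring
end

section
/- Fix r with 0 < r < π/2 and write c := cos r. Let M₁ := (0, 0, −1), M₃ := (sin r, 0, −c), M₄ := (−c(c − 1)/sin r, −(c − 1)√(2c + 1)/sin r, −c), and M₅ := (sin r·(c² − 2c − 1)/(c + 1)², 2c·sin r·√(2c + 1)/(c + 1)², −c). Then M₅ is a unit vector of ℝ³, ⟨M₅, M₁⟩ = c and ⟨M₅, M₄⟩ = c (so M₅ lies on the perimeters of the caps of angular radius r centered at M₁ and M₄), and ⟨M₅, M₃⟩ < c (so M₅ lies outside the open cap of angular radius r centered at M₃). -/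
open Real

/-!
All points other than `M₁` lie on the circle at angular distance `r` from the south pole `M₁`. Two
points of that circle whose longitudes differ by `δ` have inner product `sin² r cos δ + cos² r`,
which equals `cos r` exactly when `cos δ = cos r / (cos r + 1)`. With `α` that value of `δ`, the
points `M₃`, `M₄`, `M₅` have longitudes `0`, `α`, `2α`. So `M₅` is as far from `M₄` as `M₄` is from
`M₃`, and it is outside the cap of `M₃` because `cos 2α < cos α`.
-/

/-- The point of the unit sphere at angular distance `ρ` from the south pole and longitude `θ`.
Measuring from the south pole makes the cap centre `M₁` the point with `ρ = 0`. -/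
noncomputable def spherePoint (ρ θ : ℝ) : EuclideanSpace ℝ (Fin 3) :=
  !₂[sin ρ * cos θ, sin ρ * sin θ, -cos ρ]

/-- The difference of longitudes between two points that lie at angular distance `r` both from the
south pole and from each other. Such points exist only if `-1 / 2 ≤ cos r`; below that the value is
junk. -/
noncomputable def contactAngle (r : ℝ) : ℝ :=
  arccos (cos r / (cos r + 1))

theorem inner_vec_three (a b c x y z : ℝ) :
    inner ℝ !₂[a, b, c] !₂[x, y, z] = a * x + b * y + c * z := by
  simp [PiLp.inner_apply, Fin.sum_univ_three, mul_comm]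

theorem inner_spherePoint (ρ θ σ φ : ℝ) :
    inner ℝ (spherePoint ρ θ) (spherePoint σ φ) =
      sin ρ * sin σ * cos (θ - φ) + cos ρ * cos σ := by
  rw [spherePoint, spherePoint, inner_vec_three, cos_sub]
  ring

theorem inner_spherePoint_self (ρ θ : ℝ) :
    inner ℝ (spherePoint ρ θ) (spherePoint ρ θ) = 1 := by
  rw [inner_spherePoint, sub_self, cos_zero, mul_one, ← sq, ← sq, sin_sq_add_cos_sq]

theorem inner_spherePoint_zero_left (ρ θ φ : ℝ) :
    inner ℝ (spherePoint ρ θ) (spherePoint 0 φ) = cos ρ := by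
  simp [inner_spherePoint]

theorem cos_two_mul_lt_cos {θ : ℝ} (h : -1 / 2 < cos θ) (h' : cos θ < 1) :
    cos (2 * θ) < cos θ := by
  have h_factor : 0 < (2 * cos θ + 1) * (1 - cos θ) := mul_pos (by linarith) (by linarith)
  rw [cos_two_mul]
  linarith

section ContactAngle

variable {r : ℝ}

theorem cos_contactAngle (h : -1 / 2 ≤ cos r) :
    cos (contactAngle r) = cos r / (cos r + 1) := by
  have h_pos : 0 < cos r + 1 := by linarith
  apply cos_arccos
  · rw [le_div_iff₀ h_pos]
    linarith
  · rw [div_le_one h_pos]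
    linarith

theorem sin_contactAngle (h : -1 < cos r) :
    sin (contactAngle r) = √(2 * cos r + 1) / (cos r + 1) := by
  have h_pos : 0 < cos r + 1 := by linarith
  have h_sq : 1 - (cos r / (cos r + 1)) ^ 2 = (2 * cos r + 1) / (cos r + 1) ^ 2 := by
    field_simp
    ring
  rw [contactAngle, sin_arccos, h_sq, sqrt_div' _ (sq_nonneg _), sqrt_sq h_pos.le]

theorem inner_spherePoint_add_contactAngle (h : -1 / 2 ≤ cos r) (θ : ℝ) :
    inner ℝ (spherePoint r (θ + contactAngle r)) (spherePoint r θ) = cos r := by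
  have h_ne : cos r + 1 ≠ 0 := by linarith
  rw [inner_spherePoint, add_sub_cancel_left, cos_contactAngle h, ← sq, ← sq, sin_sq]
  field_simp
  ring

theorem cos_two_mul_contactAngle_lt (h : -1 / 3 < cos r) :
    cos (2 * contactAngle r) < cos (contactAngle r) := by
  have h_pos : 0 < cos r + 1 := by linarith
  have h_cos := cos_contactAngle (r := r) (by linarith)
  apply cos_two_mul_lt_cos
  · rw [h_cos, lt_div_iff₀ h_pos]
    linarith
  · rw [h_cos, div_lt_one h_pos]
    linarith

theorem inner_spherePoint_add_two_mul_contactAngle_lt (hs : sin r ≠ 0) (hc : -1 / 3 < cos r)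
    (θ : ℝ) :
    inner ℝ (spherePoint r (θ + 2 * contactAngle r)) (spherePoint r θ) < cos r := by
  calc inner ℝ (spherePoint r (θ + 2 * contactAngle r)) (spherePoint r θ)
      = sin r * sin r * cos (2 * contactAngle r) + cos r * cos r := by
        rw [inner_spherePoint, add_sub_cancel_left]
    _ < sin r * sin r * cos (contactAngle r) + cos r * cos r := by
        gcongr
        · exact mul_self_pos.mpr hs
        · exact cos_two_mul_contactAngle_lt hc
    _ = inner ℝ (spherePoint r (θ + contactAngle r)) (spherePoint r θ) := by
        rw [inner_spherePoint, add_sub_cancel_left]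
    _ = cos r := inner_spherePoint_add_contactAngle (by linarith) θ

theorem spherePoint_contactAngle (hs : sin r ≠ 0) (hc : -1 / 2 ≤ cos r) :
    spherePoint r (contactAngle r) =
      !₂[-(cos r * (cos r - 1)) / sin r, -((cos r - 1) * √(2 * cos r + 1)) / sin r, -cos r] := by
  have h_ne : cos r + 1 ≠ 0 := by linarith
  have h_scale (a : ℝ) : sin r * (a / (cos r + 1)) = -((cos r - 1) * a) / sin r := by
    rw [← mul_div_assoc, div_eq_div_iff h_ne hs]
    linear_combination a * sin_sq_add_cos_sq r
  rw [spherePoint, cos_contactAngle hc, sin_contactAngle (by linarith), h_scale, h_scale,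
    mul_comm (cos r - 1) (cos r)]

theorem spherePoint_two_mul_contactAngle (h : -1 / 2 ≤ cos r) :
    spherePoint r (2 * contactAngle r) =
      !₂[sin r * (cos r ^ 2 - 2 * cos r - 1) / (cos r + 1) ^ 2,
        2 * cos r * sin r * √(2 * cos r + 1) / (cos r + 1) ^ 2, -cos r] := by
  have h_ne : cos r + 1 ≠ 0 := by linarith
  have h_cos : cos (2 * contactAngle r) = (cos r ^ 2 - 2 * cos r - 1) / (cos r + 1) ^ 2 := by
    rw [cos_two_mul, cos_contactAngle h]
    field_simp
    ring
  have h_sin : sin (2 * contactAngle r) =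
      2 * cos r * √(2 * cos r + 1) / (cos r + 1) ^ 2 := by
    rw [sin_two_mul, sin_contactAngle (by linarith), cos_contactAngle h]
    field_simp
  rw [spherePoint, h_cos, h_sin, ← mul_div_assoc, ← mul_div_assoc]
  congr! 4
  ring

end ContactAngle

theorem stmt_10_general (r : ℝ) (hs : sin r ≠ 0) (hc : -1 / 3 < cos r) :
    let c := Real.cos r
    let s := Real.sin r
    let x₅ := s * (c ^ 2 - 2 * c - 1) / (c + 1) ^ 2
    let y₅ := 2 * c * s * Real.sqrt (2 * c + 1) / (c + 1) ^ 2
    let z₅ := -c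
    x₅ ^ 2 + y₅ ^ 2 + z₅ ^ 2 = 1 ∧
    x₅ * 0 + y₅ * 0 + z₅ * (-1) = c ∧
    x₅ * (-(c * (c - 1)) / s) + y₅ * (-((c - 1) * Real.sqrt (2 * c + 1)) / s) + z₅ * (-c) = c ∧
    x₅ * s + y₅ * 0 + z₅ * (-c) < c := by
  intro c s x₅ y₅ z₅
  have hc' : -1 / 2 ≤ cos r := by linarith
  have hM₁ : spherePoint 0 0 = !₂[0, 0, -1] := by simp [spherePoint]
  have hM₃ : spherePoint r 0 = !₂[s, 0, -c] := by simp [spherePoint, s, c]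
  have hM₄ := spherePoint_contactAngle hs hc'
  have hM₅ : spherePoint r (2 * contactAngle r) = !₂[x₅, y₅, z₅] :=
    spherePoint_two_mul_contactAngle hc'
  refine ⟨?_, ?_, ?_, ?_⟩
  · simpa only [hM₅, inner_vec_three, ← sq] using inner_spherePoint_self r (2 * contactAngle r)
  · simpa only [hM₁, hM₅, inner_vec_three] using
      inner_spherePoint_zero_left r (2 * contactAngle r) 0
  · simpa only [← two_mul, hM₄, hM₅, inner_vec_three] using
      inner_spherePoint_add_contactAngle hc' (contactAngle r)
  · simpa only [zero_add, hM₃, hM₅, inner_vec_three] using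
      inner_spherePoint_add_two_mul_contactAngle_lt hs hc 0

/-- For `0 < r < π/2` with `c = cos r`: the point
`M₅ = (sin r·(c² − 2c − 1)/(c + 1)², 2c·sin r·√(2c + 1)/(c + 1)², −c)`
is a unit vector, lies on the perimeters of the caps of angular radius `r` centered at
`M₁ = (0,0,−1)` and `M₄ = (−c(c−1)/sin r, −(c−1)√(2c+1)/sin r, −c)`
(inner product `= c` with each), and lies outside the open cap centered at
`M₃ = (sin r, 0, −c)` (inner product `< c`). -/
theorem stmt_10 (r : ℝ) (hr : 0 < r) (hr' : r < Real.pi / 2) :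
    let c := Real.cos r
    let s := Real.sin r
    let x₅ := s * (c ^ 2 - 2 * c - 1) / (c + 1) ^ 2
    let y₅ := 2 * c * s * Real.sqrt (2 * c + 1) / (c + 1) ^ 2
    let z₅ := -c
    x₅ ^ 2 + y₅ ^ 2 + z₅ ^ 2 = 1 ∧
    x₅ * 0 + y₅ * 0 + z₅ * (-1) = c ∧
    x₅ * (-(c * (c - 1)) / s) + y₅ * (-((c - 1) * Real.sqrt (2 * c + 1)) / s) + z₅ * (-c) = c ∧
    x₅ * s + y₅ * 0 + z₅ * (-c) < c := by
  have h_cos : 0 < cos r := cos_pos_of_mem_Ioo ⟨by linarith, hr'⟩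
  exact stmt_10_general r (sin_pos_of_pos_of_lt_pi hr (by linarith)).ne' (by linarith)
end

section
/- Fix r with 0 < r < π/2 and write c := cos r and D := 9c³ − c² − c + 1. Let M₁ := (0, 0, −1), M₂ := (−c(c − 1)/sin r, (c − 1)√(2c + 1)/sin r, −c), M₅ := (sin r·(c² − 2c − 1)/(c + 1)², 2c·sin r·√(2c + 1)/(c + 1)², −c), and M₆ := (2c·sin r·(c − 1)(2c + 1)/D, 2c·sin r·(c − 1)√(2c + 1)/D, (−4c⁴ + c³ − 5c² − c + 1)/D). Then M₆ is a unit vector of ℝ³ and ⟨M₆, M₅⟩ = c and ⟨M₆, M₂⟩ = c (so M₆ lies on the perimeters of the caps of angular radius r centered at M₅ and M₂); moreover, if in addition c² < 1/5, then ⟨M₆, M₁⟩ < c (so M₆ lies outside the open cap of angular radius r centered at M₁). -/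
open Real

/-!
`M₆` is the mirror image of `M₁` in the plane spanned by `M₂` and `M₅`. Since `M₁` is a unit vector
with inner product `c` against both `M₂` and `M₅`, so is `M₆`. A suitable normal `n` of that plane
satisfies `‖n‖² = (1 - c) D`, whence the denominator `D`, and
`⟪M₆, M₁⟫ - c = (1 - c²) (5c² - 1) / D` has the sign of `c² - 1/5`.
-/

open scoped RealInnerProductSpace

section HyperplaneReflection

variable {E : Type*} [NormedAddCommGroup E] [InnerProductSpace ℝ E]

theorem reflection_orthogonal_singleton_apply (n p : E) :
    (ℝ ∙ n)ᗮ.reflection p = p - (2 * ⟪n, p⟫ / ‖n‖ ^ 2) • n := by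
  rw [Submodule.reflection_orthogonal_apply, Submodule.reflection_singleton_apply, neg_sub,
    two_nsmul, ← add_smul, ← two_mul, mul_div_assoc, RCLike.ofReal_real_eq_id, id_eq]

theorem inner_reflection_orthogonal_singleton_of_inner_eq_zero {n x : E} (p : E)
    (h : ⟪n, x⟫ = 0) : ⟪(ℝ ∙ n)ᗮ.reflection p, x⟫ = ⟪p, x⟫ := by
  have hx : (ℝ ∙ n)ᗮ.reflection x = x :=
    Submodule.reflection_mem_subspace_eq_self
      (Submodule.mem_orthogonal_singleton_iff_inner_right.mpr h)
  rw [← (ℝ ∙ n)ᗮ.reflection.inner_map_map p x, hx]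

end HyperplaneReflection

theorem inner_vec3 (a b c x y z : ℝ) :
    ⟪!₂[a, b, c], !₂[x, y, z]⟫ = a * x + b * y + c * z := by
  simp [PiLp.inner_apply, Fin.sum_univ_three, mul_comm]

theorem norm_vec3_sq (a b c : ℝ) : ‖!₂[a, b, c]‖ ^ 2 = a ^ 2 + b ^ 2 + c ^ 2 := by
  simp [EuclideanSpace.norm_sq_eq, Fin.sum_univ_three]

theorem vec3_sub_smul (t a b c x y z : ℝ) :
    !₂[x, y, z] - t • !₂[a, b, c] = !₂[x - t * a, y - t * b, z - t * c] := by
  ext i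
  fin_cases i <;> rfl

/-- The denominator `D` of the coordinates of `M₆`. -/
def capDenom (c : ℝ) : ℝ := 9 * c ^ 3 - c ^ 2 - c + 1

/-- The cap center `M₁`. -/
def capCenter₁ : EuclideanSpace ℝ (Fin 3) := !₂[0, 0, -1]

/-- The cap center `M₂`, with `c`, `s`, `q` standing for `cos r`, `sin r`, `√(2 * cos r + 1)`. -/
noncomputable def capCenter₂ (c s q : ℝ) : EuclideanSpace ℝ (Fin 3) :=
  !₂[-(c * (c - 1)) / s, (c - 1) * q / s, -c]

/-- The cap center `M₅`, with `c`, `s`, `q` as in `capCenter₂`. -/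
noncomputable def capCenter₅ (c s q : ℝ) : EuclideanSpace ℝ (Fin 3) :=
  !₂[s * (c ^ 2 - 2 * c - 1) / (c + 1) ^ 2, 2 * c * s * q / (c + 1) ^ 2, -c]

/-- The point `M₆` at which the perimeters around `M₂` and `M₅` meet besides `M₁`, with `c`, `s`,
`q` as in `capCenter₂`. -/
noncomputable def capVertex₆ (c s q : ℝ) : EuclideanSpace ℝ (Fin 3) :=
  !₂[2 * c * s * (c - 1) * (2 * c + 1) / capDenom c, 2 * c * s * (c - 1) * q / capDenom c,
    (-4 * c ^ 4 + c ^ 3 - 5 * c ^ 2 - c + 1) / capDenom c]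

/-- A normal vector of the plane spanned by `M₂` and `M₅`, with `c`, `s`, `q` as in `capCenter₂`.
It is scaled so that `M₆ - M₁ = (2 (c - 1) q / D) • n` and `n` has polynomial coordinates. -/
def capPlaneNormal (c s q : ℝ) : EuclideanSpace ℝ (Fin 3) :=
  !₂[c * s * q, c * s, -((1 - c) ^ 2 * q)]

theorem capDenom_pos {c : ℝ} (hc : -1 / 2 ≤ c) (hc₁ : c < 1) : 0 < capDenom c := by
  have hsum : capDenom c = 2 * (c * (1 + c)) ^ 2 + (1 - c) ^ 3 * (2 * c + 1) := by
    unfold capDenom; ring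
  have h₁ : 0 < (1 - c) ^ 3 := pow_pos (by linarith) 3
  rw [hsum]
  rcases hc.eq_or_lt with rfl | hc
  · norm_num
  · have h₂ : 0 < 2 * c + 1 := by linarith
    positivity

theorem norm_capCenter₁ : ‖capCenter₁‖ = 1 := by
  rw [← sq_eq_sq₀ (norm_nonneg _) zero_le_one, capCenter₁, norm_vec3_sq]
  norm_num

theorem inner_capCenter₁_capCenter₂ (c s q : ℝ) : ⟪capCenter₁, capCenter₂ c s q⟫ = c := by
  rw [capCenter₁, capCenter₂, inner_vec3]
  ring

theorem inner_capCenter₁_capCenter₅ (c s q : ℝ) : ⟪capCenter₁, capCenter₅ c s q⟫ = c := by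
  rw [capCenter₁, capCenter₅, inner_vec3]
  ring

theorem inner_capPlaneNormal_capCenter₁ (c s q : ℝ) :
    ⟪capPlaneNormal c s q, capCenter₁⟫ = (1 - c) ^ 2 * q := by
  rw [capPlaneNormal, capCenter₁, inner_vec3]
  ring

theorem inner_capPlaneNormal_capCenter₂ (c q : ℝ) {s : ℝ} (hs : s ≠ 0) :
    ⟪capPlaneNormal c s q, capCenter₂ c s q⟫ = 0 := by
  rw [capPlaneNormal, capCenter₂, inner_vec3]
  field_simp
  ring

theorem inner_capVertex₆_capCenter₁ {c : ℝ} (s q : ℝ) (hD : capDenom c ≠ 0) :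
    ⟪capVertex₆ c s q, capCenter₁⟫ = c + (1 - c ^ 2) * (5 * c ^ 2 - 1) / capDenom c := by
  rw [capVertex₆, capCenter₁, inner_vec3]
  field_simp
  unfold capDenom
  ring

section

variable {c s q : ℝ} (hs : s ^ 2 = 1 - c ^ 2)
include hs

theorem inner_capPlaneNormal_capCenter₅ (hc : c + 1 ≠ 0) :
    ⟪capPlaneNormal c s q, capCenter₅ c s q⟫ = 0 := by
  calc ⟪capPlaneNormal c s q, capCenter₅ c s q⟫
      = c * q * (s ^ 2 * (c ^ 2 - 1) / (c + 1) ^ 2 + (1 - c) ^ 2) := by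
        rw [capPlaneNormal, capCenter₅, inner_vec3]; ring
    _ = 0 := by rw [hs]; field_simp; ring

variable (hq : q ^ 2 = 2 * c + 1)
include hq

theorem norm_capPlaneNormal_sq : ‖capPlaneNormal c s q‖ ^ 2 = (1 - c) * capDenom c := by
  calc ‖capPlaneNormal c s q‖ ^ 2 = c ^ 2 * s ^ 2 * (q ^ 2 + 1) + (1 - c) ^ 4 * q ^ 2 := by
        rw [capPlaneNormal, norm_vec3_sq]; ring
    _ = (1 - c) * capDenom c := by rw [hs, hq, capDenom]; ring

theorem reflection_capCenter₁ (hc : 1 - c ≠ 0) (hD : capDenom c ≠ 0) :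
    (ℝ ∙ capPlaneNormal c s q)ᗮ.reflection capCenter₁ = capVertex₆ c s q := by
  have hcoeff : 2 * ((1 - c) ^ 2 * q) / ((1 - c) * capDenom c) = 2 * (1 - c) * q / capDenom c := by
    field_simp
  have hx : 0 - 2 * (1 - c) * q / capDenom c * (c * s * q) =
      2 * c * s * (c - 1) * (2 * c + 1) / capDenom c := by
    rw [← hq]; ring
  have hy : 0 - 2 * (1 - c) * q / capDenom c * (c * s) =
      2 * c * s * (c - 1) * q / capDenom c := by
    ring
  have hz : -1 - 2 * (1 - c) * q / capDenom c * -((1 - c) ^ 2 * q) =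
      (-4 * c ^ 4 + c ^ 3 - 5 * c ^ 2 - c + 1) / capDenom c := by
    field_simp
    rw [hq, capDenom]
    ring
  rw [reflection_orthogonal_singleton_apply, inner_capPlaneNormal_capCenter₁,
    norm_capPlaneNormal_sq hs hq, hcoeff, capCenter₁, capPlaneNormal, vec3_sub_smul, hx, hy, hz,
    capVertex₆]

end

theorem neg_half_le_cos {r : ℝ} (hr : 0 ≤ r) (hr' : r ≤ 2 * π / 3) : -1 / 2 ≤ cos r := by
  have hcos : cos (2 * π / 3) = -1 / 2 := by
    rw [show 2 * π / 3 = π - π / 3 by ring, cos_pi_sub, cos_pi_div_three]; norm_num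
  rw [← hcos]
  exact cos_le_cos_of_nonneg_of_le_pi hr (by linarith [pi_pos]) hr'

/-- The upper bound on `r` keeps the radicand `2 * cos r + 1` nonnegative, so that `√` is not the
junk value `0`. -/
theorem stmt_11_general {r : ℝ} (hr : 0 < r) (hr' : r ≤ 2 * π / 3) :
    let c := cos r
    let s := sin r
    let q := √(2 * c + 1)
    (‖capVertex₆ c s q‖ = 1 ∧ ⟪capVertex₆ c s q, capCenter₅ c s q⟫ = c ∧
      ⟪capVertex₆ c s q, capCenter₂ c s q⟫ = c) ∧
    (⟪capVertex₆ c s q, capCenter₁⟫ < c ↔ c ^ 2 < 1 / 5) := by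
  intro c s q
  have hc : -1 / 2 ≤ c := neg_half_le_cos hr.le hr'
  have hs_pos : 0 < s := sin_pos_of_pos_of_lt_pi hr (by linarith [pi_pos])
  have hs : s ^ 2 = 1 - c ^ 2 := sin_sq r
  have hc_sq : 0 < 1 - c ^ 2 := hs ▸ pow_pos hs_pos 2
  have hc₁ : c < 1 := by nlinarith
  have hq : q ^ 2 = 2 * c + 1 := sq_sqrt (by linarith)
  have hD : 0 < capDenom c := capDenom_pos hc hc₁
  have hrefl := reflection_capCenter₁ hs hq (by linarith) hD.ne'
  refine ⟨⟨?_, ?_, ?_⟩, ?_⟩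
  · rw [← hrefl, LinearIsometryEquiv.norm_map, norm_capCenter₁]
  · rw [← hrefl, inner_reflection_orthogonal_singleton_of_inner_eq_zero _
      (inner_capPlaneNormal_capCenter₅ hs (by linarith)), inner_capCenter₁_capCenter₅]
  · rw [← hrefl, inner_reflection_orthogonal_singleton_of_inner_eq_zero _
      (inner_capPlaneNormal_capCenter₂ c q hs_pos.ne'), inner_capCenter₁_capCenter₂]
  · rw [inner_capVertex₆_capCenter₁ s q hD.ne', add_lt_iff_neg_left, div_lt_iff₀ hD, zero_mul,
      ← smul_eq_mul, smul_neg_iff_of_pos_left hc_sq, sub_neg, lt_div_iff₀' (by norm_num)]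

/-- For `0 < r < π/2` with `c = cos r` and `D = 9c³ − c² − c + 1`: the point
`M₆ = (2c·sin r·(c−1)(2c+1)/D, 2c·sin r·(c−1)√(2c+1)/D, (−4c⁴+c³−5c²−c+1)/D)`
is a unit vector, lies on the perimeters of the caps of angular radius `r` centered at
`M₅ = (sin r·(c²−2c−1)/(c+1)², 2c·sin r·√(2c+1)/(c+1)², −c)` and
`M₂ = (−c(c−1)/sin r, (c−1)√(2c+1)/sin r, −c)` (inner product `= c` with each);
moreover if `c² < 1/5` then `⟨M₆, M₁⟩ < c` for `M₁ = (0,0,−1)`. -/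
theorem stmt_11 (r : ℝ) (hr : 0 < r) (hr' : r < Real.pi / 2) :
    let c := Real.cos r
    let s := Real.sin r
    let D := 9 * c ^ 3 - c ^ 2 - c + 1
    let x₆ := 2 * c * s * (c - 1) * (2 * c + 1) / D
    let y₆ := 2 * c * s * (c - 1) * Real.sqrt (2 * c + 1) / D
    let z₆ := (-4 * c ^ 4 + c ^ 3 - 5 * c ^ 2 - c + 1) / D
    (x₆ ^ 2 + y₆ ^ 2 + z₆ ^ 2 = 1 ∧
     x₆ * (s * (c ^ 2 - 2 * c - 1) / (c + 1) ^ 2)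
       + y₆ * (2 * c * s * Real.sqrt (2 * c + 1) / (c + 1) ^ 2) + z₆ * (-c) = c ∧
     x₆ * (-(c * (c - 1)) / s) + y₆ * ((c - 1) * Real.sqrt (2 * c + 1) / s) + z₆ * (-c) = c)
    ∧ (c ^ 2 < 1 / 5 → x₆ * 0 + y₆ * 0 + z₆ * (-1) < c) := by
  obtain ⟨⟨hnorm, h₆₅, h₆₂⟩, h₆₁⟩ := stmt_11_general hr (by linarith [pi_pos] : r ≤ 2 * π / 3)
  rw [← sq_eq_sq₀ (norm_nonneg _) zero_le_one, one_pow, capVertex₆, norm_vec3_sq] at hnorm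
  simp only [capVertex₆, capCenter₅, capCenter₂, capCenter₁, inner_vec3] at h₆₅ h₆₂ h₆₁
  exact ⟨⟨hnorm, h₆₅, h₆₂⟩, h₆₁.mpr⟩
end

section
/- Fix r with 0 < r < π/2 and write c := cos r and D := 9c³ − c² − c + 1. Let M₂ := (−c(c − 1)/sin r, (c − 1)√(2c + 1)/sin r, −c), M₆ := (2c·sin r·(c − 1)(2c + 1)/D, 2c·sin r·(c − 1)√(2c + 1)/D, (−4c⁴ + c³ − 5c² − c + 1)/D), and M₇ := (sin r·(c³ − 5c² − c + 1)/D, −4 sin r·c²·√(2c + 1)/D, −c(c³ + 11c² − c − 3)/D). Then M₇ is a unit vector of ℝ³ and ⟨M₇, M₆⟩ = c and ⟨M₇, M₂⟩ = c (so M₇ is a cross point of the perimeters of the caps of angular radius r centered at M₆ and at M₂). -/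
open Real

/-!
The points `M₂`, `M₆`, `M₇` are the vertices of an equilateral spherical triangle of side `r`:
already `⟨M₆, M₂⟩ = c`, and `M₇` is an apex over the edge `M₆M₂`. Two circles of equal radius
about unit vectors `a`, `b` meet at the points `k (a + b) + t (a × b)`, where `k` is fixed by the
radius and `t`, up to sign, by the norm. For an equilateral triangle this gives `k = c / (1 + c)`
and `t = ± √(2c + 1) / (1 + c)`. All of this is algebra over a field in which `c² + s² = 1` and
`q² = 2c + 1`.
-/

open Matrix

theorem one_add_ne_zero_of_sq_add_sq {R : Type*} [CommRing R] [IsReduced R] {c s : R}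
    (hcs : s ^ 2 + c ^ 2 = 1) (hs : s ≠ 0) : 1 + c ≠ 0 := by
  intro h
  have hs₂ : s ^ 2 = 0 := by linear_combination hcs + (1 - c) * h
  exact hs (eq_zero_of_pow_eq_zero hs₂)

section CrossPoint

variable {K : Type*} [Field K] {a b : Fin 3 → K} {ρ t : K}

/-- A point of the intersection of the planes `⟨x, a⟩ = ρ` and `⟨x, b⟩ = ρ` for unit vectors
with `⟨a, b⟩ ≠ -1`: the one at parameter `t` along the direction `a × b`, with `t = 0` in the span
of `a` and `b`. Two circles of equal radius on the unit sphere cross at such points. -/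
def crossPoint (a b : Fin 3 → K) (ρ t : K) : Fin 3 → K :=
  (ρ / (1 + a ⬝ᵥ b)) • (a + b) + t • (a ⨯₃ b)

theorem crossPoint_dotProduct_left (ha : a ⬝ᵥ a = 1) (hab : 1 + a ⬝ᵥ b ≠ 0) :
    crossPoint a b ρ t ⬝ᵥ a = ρ := by
  rw [dotProduct_comm]
  simp only [crossPoint, dotProduct_add, dotProduct_smul, dot_self_cross, ha, smul_eq_mul,
    mul_zero, add_zero]
  exact div_mul_cancel₀ ρ hab

theorem crossPoint_dotProduct_right (hb : b ⬝ᵥ b = 1) (hab : 1 + a ⬝ᵥ b ≠ 0) :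
    crossPoint a b ρ t ⬝ᵥ b = ρ := by
  rw [dotProduct_comm]
  simp only [crossPoint, dotProduct_add, dotProduct_smul, dot_cross_self, hb, smul_eq_mul,
    mul_zero, add_zero, dotProduct_comm b a, add_comm (a ⬝ᵥ b) 1]
  exact div_mul_cancel₀ ρ hab

theorem crossPoint_dotProduct_self (ha : a ⬝ᵥ a = 1) (hb : b ⬝ᵥ b = 1) (hab : 1 + a ⬝ᵥ b ≠ 0) :
    crossPoint a b ρ t ⬝ᵥ crossPoint a b ρ t =
      2 * ρ ^ 2 / (1 + a ⬝ᵥ b) + t ^ 2 * (1 - (a ⬝ᵥ b) ^ 2) := by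
  have normal_part : crossPoint a b ρ t ⬝ᵥ (a ⨯₃ b) = t * (1 - (a ⬝ᵥ b) ^ 2) := by
    simp only [crossPoint, add_dotProduct, smul_dotProduct, dot_self_cross, dot_cross_self,
      cross_dot_cross, ha, hb, dotProduct_comm b a, smul_eq_mul]
    ring
  calc crossPoint a b ρ t ⬝ᵥ crossPoint a b ρ t
      = ρ / (1 + a ⬝ᵥ b) * (crossPoint a b ρ t ⬝ᵥ a + crossPoint a b ρ t ⬝ᵥ b) +
          t * (crossPoint a b ρ t ⬝ᵥ (a ⨯₃ b)) := by
        conv_lhs => rhs; rw [crossPoint]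
        simp only [dotProduct_add, dotProduct_smul, smul_eq_mul]
    _ = 2 * ρ ^ 2 / (1 + a ⬝ᵥ b) + t ^ 2 * (1 - (a ⬝ᵥ b) ^ 2) := by
        rw [crossPoint_dotProduct_left ha hab, crossPoint_dotProduct_right hb hab, normal_part]
        ring

theorem crossPoint_dotProduct_self_of_equilateral {q : K} (ha : a ⬝ᵥ a = 1) (hb : b ⬝ᵥ b = 1)
    (hab : 1 + a ⬝ᵥ b ≠ 0) (hq : q ^ 2 = 2 * (a ⬝ᵥ b) + 1) :
    crossPoint a b (a ⬝ᵥ b) (q / (1 + a ⬝ᵥ b)) ⬝ᵥ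
      crossPoint a b (a ⬝ᵥ b) (q / (1 + a ⬝ᵥ b)) = 1 := by
  rw [crossPoint_dotProduct_self ha hb hab, div_pow, hq]
  field_simp
  ring

end CrossPoint

section Configuration

variable {K : Type*} [Field K] {c s q : K}

/-- The common denominator `D` of the coordinates of `M₆` and `M₇`. -/
def denomD (c : K) : K :=
  9 * c ^ 3 - c ^ 2 - c + 1

theorem denomD_pos [LinearOrder K] [IsStrictOrderedRing K] (hc : 0 ≤ 2 * c + 1) :
    0 < denomD c := by
  have key : 288 * denomD c = (2 * c + 1) * ((18 * (2 * c + 1) - 29) ^ 2 + 131) + 36 := by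
    rw [denomD]
    ring
  have : 0 < 288 * denomD c := key ▸ by positivity
  linarith

/-- The cap center `M₂`, with `c`, `s`, `q` standing for `cos r`, `sin r`, `√(2 cos r + 1)`. -/
def pointM₂ (c s q : K) : Fin 3 → K :=
  ![-(c * (c - 1)) / s, (c - 1) * q / s, -c]

/-- The cap center `M₆`, with `c`, `s`, `q` as in `pointM₂`. -/
def pointM₆ (c s q : K) : Fin 3 → K :=
  ![2 * c * s * (c - 1) * (2 * c + 1) / denomD c, 2 * c * s * (c - 1) * q / denomD c,
    (-4 * c ^ 4 + c ^ 3 - 5 * c ^ 2 - c + 1) / denomD c]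

/-- The cross point `M₇` of the perimeters of the caps centered at `M₆` and `M₂`, with `c`, `s`,
`q` as in `pointM₂`. -/
def pointM₇ (c s q : K) : Fin 3 → K :=
  ![s * (c ^ 3 - 5 * c ^ 2 - c + 1) / denomD c, -(4 * s * c ^ 2 * q) / denomD c,
    -(c * (c ^ 3 + 11 * c ^ 2 - c - 3)) / denomD c]

theorem pointM₂_dotProduct_self (hcs : s ^ 2 + c ^ 2 = 1) (hq : q ^ 2 = 2 * c + 1) (hs : s ≠ 0) :
    pointM₂ c s q ⬝ᵥ pointM₂ c s q = 1 := by
  simp only [pointM₂, vec3_dotProduct']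
  field_simp
  linear_combination (c - 1) ^ 2 * hq + (c ^ 2 - 1) * hcs

theorem pointM₆_dotProduct_self (hcs : s ^ 2 + c ^ 2 = 1) (hq : q ^ 2 = 2 * c + 1)
    (hD : denomD c ≠ 0) : pointM₆ c s q ⬝ᵥ pointM₆ c s q = 1 := by
  simp only [pointM₆, vec3_dotProduct']
  field_simp
  rw [denomD]
  linear_combination 4 * c ^ 2 * (c - 1) ^ 2 * ((2 * c + 1) ^ 2 + q ^ 2) * hcs +
    4 * c ^ 2 * (c - 1) ^ 2 * (1 - c ^ 2) * hq

theorem pointM₆_dotProduct_pointM₂ (hq : q ^ 2 = 2 * c + 1) (hs : s ≠ 0) (hD : denomD c ≠ 0) :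
    pointM₆ c s q ⬝ᵥ pointM₂ c s q = c := by
  simp only [pointM₆, pointM₂, vec3_dotProduct']
  field_simp
  rw [denomD]
  linear_combination 2 * c * (c - 1) ^ 2 * hq

theorem pointM₇_eq_crossPoint (hcs : s ^ 2 + c ^ 2 = 1) (hq : q ^ 2 = 2 * c + 1) (hs : s ≠ 0)
    (hD : denomD c ≠ 0) :
    pointM₇ c s q = crossPoint (pointM₆ c s q) (pointM₂ c s q) c (q / (1 + c)) := by
  have hc : 1 + c ≠ 0 := one_add_ne_zero_of_sq_add_sq hcs hs
  simp only [crossPoint, pointM₆_dotProduct_pointM₂ hq hs hD]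
  simp only [pointM₂, pointM₆, pointM₇, cross_apply, cons_val, vec3_add, smul_vec3, smul_eq_mul]
  apply vec3_eq <;> field_simp <;> rw [denomD]
  · linear_combination (c ^ 3 - 5 * c ^ 2 - c + 1) * (1 + c) * hcs +
      (c - 1) * (2 * s ^ 2 * c ^ 2 - 4 * c ^ 4 + c ^ 3 - 5 * c ^ 2 - c + 1) * hq
  · linear_combination -4 * c ^ 3 * (1 + c) * q * hcs
  · linear_combination -2 * c * (c - 1) ^ 2 * (3 * c + 1) * hq

theorem stmt_12_general (hcs : s ^ 2 + c ^ 2 = 1) (hq : q ^ 2 = 2 * c + 1) (hs : s ≠ 0)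
    (hD : denomD c ≠ 0) :
    pointM₇ c s q ⬝ᵥ pointM₇ c s q = 1 ∧ pointM₇ c s q ⬝ᵥ pointM₆ c s q = c ∧
      pointM₇ c s q ⬝ᵥ pointM₂ c s q = c := by
  have h₂ := pointM₂_dotProduct_self hcs hq hs
  have h₆ := pointM₆_dotProduct_self hcs hq hD
  have h₆₂ := pointM₆_dotProduct_pointM₂ hq hs hD
  have hne : 1 + pointM₆ c s q ⬝ᵥ pointM₂ c s q ≠ 0 :=
    h₆₂.symm ▸ one_add_ne_zero_of_sq_add_sq hcs hs
  rw [pointM₇_eq_crossPoint hcs hq hs hD]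
  refine ⟨?_, crossPoint_dotProduct_left h₆ hne, crossPoint_dotProduct_right h₂ hne⟩
  simpa only [h₆₂] using
    crossPoint_dotProduct_self_of_equilateral h₆ h₂ hne (hq.trans (by rw [h₆₂]))

end Configuration

/-- For `0 < r < π/2` with `c = cos r` and `D = 9c³ − c² − c + 1`: the point
`M₇ = (sin r·(c³−5c²−c+1)/D, −4 sin r·c²·√(2c+1)/D, −c(c³+11c²−c−3)/D)`
is a unit vector and lies on the perimeters of the caps of angular radius `r` centered at
`M₆ = (2c·sin r·(c−1)(2c+1)/D, 2c·sin r·(c−1)√(2c+1)/D, (−4c⁴+c³−5c²−c+1)/D)` and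
`M₂ = (−c(c−1)/sin r, (c−1)√(2c+1)/sin r, −c)` (inner product `= c` with each). -/
theorem stmt_12 (r : ℝ) (hr : 0 < r) (hr' : r < Real.pi / 2) :
    let c := Real.cos r
    let s := Real.sin r
    let D := 9 * c ^ 3 - c ^ 2 - c + 1
    let x₇ := s * (c ^ 3 - 5 * c ^ 2 - c + 1) / D
    let y₇ := -(4 * s * c ^ 2 * Real.sqrt (2 * c + 1)) / D
    let z₇ := -(c * (c ^ 3 + 11 * c ^ 2 - c - 3)) / D
    x₇ ^ 2 + y₇ ^ 2 + z₇ ^ 2 = 1 ∧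
    x₇ * (2 * c * s * (c - 1) * (2 * c + 1) / D)
      + y₇ * (2 * c * s * (c - 1) * Real.sqrt (2 * c + 1) / D)
      + z₇ * ((-4 * c ^ 4 + c ^ 3 - 5 * c ^ 2 - c + 1) / D) = c ∧
    x₇ * (-(c * (c - 1)) / s) + y₇ * ((c - 1) * Real.sqrt (2 * c + 1) / s) + z₇ * (-c) = c := by
  have hc : 0 < cos r := cos_pos_of_mem_Ioo ⟨by linarith, hr'⟩
  have hs : sin r ≠ 0 := (sin_pos_of_pos_of_lt_pi hr (by linarith)).ne'
  have hq : 0 ≤ 2 * cos r + 1 := by positivity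
  simpa only [pointM₂, pointM₆, pointM₇, denomD, vec3_dotProduct', ← sq] using
    stmt_12_general (sin_sq_add_cos_sq r) (sq_sqrt hq) hs (denomD_pos hq).ne'
end

section
/- Let r₁₀ := arctan(√((4/√3)·cos((1/3)·arctan(√687/9)) + 3)), write c := cos r₁₀ and D := 9c³ − c² − c + 1, and define the unit vectors M₃ := (sin r₁₀, 0, −c), M₆ := (2c·sin r₁₀·(c − 1)(2c + 1)/D, 2c·sin r₁₀·(c − 1)√(2c + 1)/D, (−4c⁴ + c³ − 5c² − c + 1)/D), and M₇ := (sin r₁₀·(c³ − 5c² − c + 1)/D, −4 sin r₁₀·c²·√(2c + 1)/D, −c(c³ + 11c² − c − 3)/D). Then there exists a unit vector w ∈ ℝ³ satisfying simultaneously ⟨M₃, w⟩ = c, ⟨M₆, w⟩ = (3c³ + 2c² − c − 2(1 − c²)·√(c + 2c²))/(1 + c)², and ⟨M₇, w⟩ = c. -/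
open Real

/-!
Viète's trigonometric formula shows that `u = tan² r₁₀ - 3` is the positive root of
`u³ = 4u + 1`. Substituting `u = 1 / c² - 4` gives a polynomial in `c²` that splits as
`(7c³ - 4c² - 2c + 1)(7c³ + 4c² - 2c - 1)`, and `0 < c < 1/2` selects the first factor. Modulo
this cubic, `√(c + 2c²)` becomes the polynomial `2 - 7c²`, so the three prescribed inner products
form a linear system over `ℚ(c, s, √(2c + 1))`. Its solution is a unit vector.
-/

section VieteFormula

theorem two_mul_mul_cos_third_pow_three (r θ : ℝ) :
    (2 * r * cos (1 / 3 * θ)) ^ 3 =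
      3 * r ^ 2 * (2 * r * cos (1 / 3 * θ)) + 2 * r ^ 3 * cos θ := by
  have triple_angle : cos θ = 4 * cos (1 / 3 * θ) ^ 3 - 3 * cos (1 / 3 * θ) := by
    rw [← cos_three_mul, one_div, mul_inv_cancel_left₀ three_ne_zero]
  rw [triple_angle]
  ring

theorem cos_third_arctan_pos (x : ℝ) : 0 < cos (1 / 3 * arctan x) :=
  cos_pos_of_mem_Ioo
    ⟨by linarith [neg_pi_div_two_lt_arctan x, pi_pos], by linarith [arctan_lt_pi_div_two x, pi_pos]⟩

/-- The positive root of `u³ = 4u + 1` in Viète's trigonometric form. It is `tan² r₁₀ - 3`, where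
`r₁₀` is the Tammes radius for ten points. -/
noncomputable def tammesCubicRoot : ℝ :=
  4 / √3 * cos (1 / 3 * arctan (√687 / 9))

theorem tammesCubicRoot_pos : 0 < tammesCubicRoot :=
  mul_pos (by positivity) (cos_third_arctan_pos _)

theorem tammesCubicRoot_pow_three : tammesCubicRoot ^ 3 = 4 * tammesCubicRoot + 1 := by
  have viete := two_mul_mul_cos_third_pow_three (2 / √3) (arctan (√687 / 9))
  have linear_coeff : 3 * (2 / √3) ^ 2 = 4 := by
    rw [div_pow, sq_sqrt (by norm_num)]
    norm_num
  have constant_coeff : 2 * (2 / √3) ^ 3 * (9 / (16 * √3)) = 1 := by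
    have sqrt_pow_four : √3 ^ 4 = 9 := by
      rw [pow_mul _ 2 2, sq_sqrt (by norm_num)]
      norm_num
    field_simp
    rw [sqrt_pow_four]
    norm_num
  have amplitude : 2 * (2 / √3) = 4 / √3 := by ring
  rwa [cos_arctan_sqrt_687_div_nine, linear_coeff, constant_coeff, amplitude] at viete

end VieteFormula

section TammesRadius

theorem sq_lt_one_fourth_of_sq_mul_add_four {u c : ℝ} (hu : 0 < u) (hcu : c ^ 2 * (u + 4) = 1) :
    c ^ 2 < 1 / 4 := by
  rw [eq_one_div_of_mul_eq_one_left hcu]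
  exact one_div_lt_one_div_of_lt four_pos (by linarith)

theorem cubic_mul_cubic_eq_zero_of_sq_mul_add_four {u c : ℝ} (hu : u ^ 3 = 4 * u + 1)
    (hcu : c ^ 2 * (u + 4) = 1) :
    (7 * c ^ 3 - 4 * c ^ 2 - 2 * c + 1) * (7 * c ^ 3 + 4 * c ^ 2 - 2 * c - 1) = 0 := by
  have sq_mul : c ^ 2 * u = 1 - 4 * c ^ 2 := by linear_combination hcu
  have cleared : (c ^ 2 * u) ^ 3 = 4 * (c ^ 2) ^ 2 * (c ^ 2 * u) + (c ^ 2) ^ 3 := by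
    rw [mul_pow, hu]
    ring
  rw [sq_mul] at cleared
  linear_combination -cleared

theorem cubic_eq_zero_of_sq_mul_add_four {u c : ℝ} (hu : 0 < u) (hu3 : u ^ 3 = 4 * u + 1)
    (hc : 0 < c) (hcu : c ^ 2 * (u + 4) = 1) : 7 * c ^ 3 - 4 * c ^ 2 - 2 * c + 1 = 0 := by
  have c_sq_lt := sq_lt_one_fourth_of_sq_mul_add_four hu hcu
  have second_factor_neg : 7 * c ^ 3 + 4 * c ^ 2 - 2 * c - 1 < 0 := by
    calc 7 * c ^ 3 + 4 * c ^ 2 - 2 * c - 1 = c * (7 * c ^ 2 - 2) + (4 * c ^ 2 - 1) := by ring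
      _ < 0 := add_neg (mul_neg_of_pos_of_neg hc (by linarith)) (by linarith)
  exact (mul_eq_zero.mp (cubic_mul_cubic_eq_zero_of_sq_mul_add_four hu3 hcu)).resolve_right
    second_factor_neg.ne

/-- The exact maximal angular radius `r₁₀` in the Tammes problem for ten points. -/
noncomputable def tammesRadius : ℝ :=
  arctan √(tammesCubicRoot + 3)

theorem cos_tammesRadius_pos : 0 < cos tammesRadius :=
  cos_arctan_pos _

theorem cos_tammesRadius_sq_mul : cos tammesRadius ^ 2 * (tammesCubicRoot + 4) = 1 := by
  have u_pos := tammesCubicRoot_pos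
  rw [tammesRadius, cos_sq_arctan, sq_sqrt (by positivity)]
  field_simp
  ring

theorem cos_tammesRadius_sq_lt : cos tammesRadius ^ 2 < 1 / 4 :=
  sq_lt_one_fourth_of_sq_mul_add_four tammesCubicRoot_pos cos_tammesRadius_sq_mul

theorem cos_tammesRadius_cubic :
    7 * cos tammesRadius ^ 3 - 4 * cos tammesRadius ^ 2 - 2 * cos tammesRadius + 1 = 0 :=
  cubic_eq_zero_of_sq_mul_add_four tammesCubicRoot_pos tammesCubicRoot_pow_three
    cos_tammesRadius_pos cos_tammesRadius_sq_mul

theorem sin_tammesRadius_pos : 0 < sin tammesRadius :=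
  sin_arctan_pos.mpr (sqrt_pos.mpr (by linarith [tammesCubicRoot_pos]))

end TammesRadius

section CapCenters

variable {c s q : ℝ}

/-- The common denominator `D` of the coordinates of `M₆` and `M₇`. -/
def centerDenom (c : ℝ) : ℝ :=
  9 * c ^ 3 - c ^ 2 - c + 1

/-- The cap center `M₃`, where `c` and `s` stand for the cosine and the sine of the cap radius. -/
def center₃ (c s : ℝ) : Fin 3 → ℝ :=
  ![s, 0, -c]

/-- The cap center `M₆`, where `c` and `s` are as in `center₃` and `q` stands for `√(2c + 1)`. -/
noncomputable def center₆ (c s q : ℝ) : Fin 3 → ℝ :=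
  ![2 * c * s * (c - 1) * (2 * c + 1) / centerDenom c,
    2 * c * s * (c - 1) * q / centerDenom c,
    (-4 * c ^ 4 + c ^ 3 - 5 * c ^ 2 - c + 1) / centerDenom c]

/-- The cap center `M₇`, with the parameters of `center₆`. -/
noncomputable def center₇ (c s q : ℝ) : Fin 3 → ℝ :=
  ![s * (c ^ 3 - 5 * c ^ 2 - c + 1) / centerDenom c,
    -(4 * s * c ^ 2 * q) / centerDenom c,
    -(c * (c ^ 3 + 11 * c ^ 2 - c - 3)) / centerDenom c]

/-- The cap center `M₁₀`, with the parameters of `center₆`. The coordinates solve the linear system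
given by the inner products with `M₃`, `M₆` and `M₇`, simplified modulo
`7c³ - 4c² - 2c + 1`. -/
noncomputable def center₁₀ (c s q : ℝ) : Fin 3 → ℝ :=
  ![(1 - 2 * c ^ 2) / s, -c ^ 2 / (s * q), 1 + 2 * c - 7 * c ^ 2]

theorem centerDenom_pos (hc : 0 ≤ c) : 0 < centerDenom c := by
  calc 0 < c * (3 * c - 1) ^ 2 + (4 * c ^ 2 + (c - 1) ^ 2) := by
        refine add_pos_of_nonneg_of_pos (by positivity) ?_
        nlinarith [sq_nonneg (5 * c - 1)]
    _ = centerDenom c := by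
        rw [centerDenom]
        ring

theorem center₁₀_dotProduct_self (hs0 : s ≠ 0) (hs : s ^ 2 = 1 - c ^ 2) (hq0 : q ≠ 0)
    (hq : q ^ 2 = 2 * c + 1) (hc : 7 * c ^ 3 - 4 * c ^ 2 - 2 * c + 1 = 0) :
    center₁₀ c s q ⬝ᵥ center₁₀ c s q = 1 := by
  have cleared : (2 * c + 1) * (1 - 2 * c ^ 2) ^ 2 + c ^ 4
      + (1 - c ^ 2) * (2 * c + 1) * (1 + 2 * c - 7 * c ^ 2) ^ 2
      = (1 - c ^ 2) * (2 * c + 1) := by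
    linear_combination (-14 * c ^ 4 - 7 * c ^ 3 + 14 * c ^ 2 + 8 * c + 1) * hc
  rw [← hs, ← hq] at cleared
  rw [center₁₀, Matrix.vec3_dotProduct']
  field_simp
  linear_combination cleared

theorem center₃_dotProduct_center₁₀ (hs0 : s ≠ 0) (hc : 7 * c ^ 3 - 4 * c ^ 2 - 2 * c + 1 = 0) :
    center₃ c s ⬝ᵥ center₁₀ c s q = c := by
  rw [center₃, center₁₀, Matrix.vec3_dotProduct', mul_div_cancel₀ _ hs0]
  linear_combination hc

theorem center₆_dotProduct_center₁₀ (hs0 : s ≠ 0) (hq0 : q ≠ 0) (hD : centerDenom c ≠ 0)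
    (hc : 7 * c ^ 3 - 4 * c ^ 2 - 2 * c + 1 = 0) :
    center₆ c s q ⬝ᵥ center₁₀ c s q = 7 * c ^ 2 - 2 * c - 1 := by
  rw [center₆, center₁₀, Matrix.vec3_dotProduct']
  field_simp
  rw [centerDenom]
  linear_combination (4 * c ^ 3 - 10 * c ^ 2 + 4 * c + 2) * hc

theorem center₇_dotProduct_center₁₀ (hs0 : s ≠ 0) (hq0 : q ≠ 0) (hD : centerDenom c ≠ 0)
    (hc : 7 * c ^ 3 - 4 * c ^ 2 - 2 * c + 1 = 0) :
    center₇ c s q ⬝ᵥ center₁₀ c s q = c := by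
  rw [center₇, center₁₀, Matrix.vec3_dotProduct']
  field_simp
  rw [centerDenom]
  linear_combination (c ^ 3 + 11 * c ^ 2 + 3 * c + 1) * hc

end CapCenters

section SideLength

variable {c : ℝ}

theorem sqrt_add_two_mul_sq (hc7 : 7 * c ^ 2 ≤ 2) (hc : 7 * c ^ 3 - 4 * c ^ 2 - 2 * c + 1 = 0) :
    √(c + 2 * c ^ 2) = 2 - 7 * c ^ 2 := by
  have sq_eq : c + 2 * c ^ 2 = (2 - 7 * c ^ 2) ^ 2 := by
    linear_combination -(7 * c + 4) * hc
  rw [sq_eq, sqrt_sq (by linarith)]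

-- The left-hand side is `c² + (1 - c²) cos (α + β)`, where `cos α = c / (1 + c)` and
-- `cos β = (c - 1) / (1 + c)` for the angles `α` of the equilateral triangle and `β` of the square.
theorem cos_side₆₁₀_eq (hc7 : 7 * c ^ 2 ≤ 2) (hc : 7 * c ^ 3 - 4 * c ^ 2 - 2 * c + 1 = 0) :
    (3 * c ^ 3 + 2 * c ^ 2 - c - 2 * (1 - c ^ 2) * √(c + 2 * c ^ 2)) / (1 + c) ^ 2 =
      7 * c ^ 2 - 2 * c - 1 := by
  have one_add_ne_zero : 1 + c ≠ 0 := by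
    intro h
    obtain rfl : c = -1 := by linarith
    norm_num at hc
  rw [sqrt_add_two_mul_sq hc7 hc, div_eq_iff (pow_ne_zero 2 one_add_ne_zero)]
  linear_combination (-3 * c - 3) * hc

end SideLength

/-- With `r₁₀ = arctan(√((4/√3)·cos((1/3)·arctan(√687/9)) + 3))`, `c = cos r₁₀` and
`D = 9c³ − c² − c + 1`, there exists a unit vector `w = (wx, wy, wz) ∈ ℝ³` with
`⟨M₃, w⟩ = c`, `⟨M₆, w⟩ = (3c³ + 2c² − c − 2(1 − c²)√(c + 2c²))/(1 + c)²` and `⟨M₇, w⟩ = c`,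
where `M₃ = (sin r₁₀, 0, −c)`,
`M₆ = (2c·sin r₁₀·(c−1)(2c+1)/D, 2c·sin r₁₀·(c−1)√(2c+1)/D, (−4c⁴+c³−5c²−c+1)/D)` and
`M₇ = (sin r₁₀·(c³−5c²−c+1)/D, −4 sin r₁₀·c²·√(2c+1)/D, −c(c³+11c²−c−3)/D)`. -/
theorem stmt_13 :
    let r₁₀ : ℝ := Real.arctan (Real.sqrt
      (4 / Real.sqrt 3 * Real.cos ((1 / 3) * Real.arctan (Real.sqrt 687 / 9)) + 3))
    let c := Real.cos r₁₀
    let s := Real.sin r₁₀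
    let D := 9 * c ^ 3 - c ^ 2 - c + 1
    ∃ wx wy wz : ℝ,
      wx ^ 2 + wy ^ 2 + wz ^ 2 = 1 ∧
      s * wx + 0 * wy + (-c) * wz = c ∧
      (2 * c * s * (c - 1) * (2 * c + 1) / D) * wx
        + (2 * c * s * (c - 1) * Real.sqrt (2 * c + 1) / D) * wy
        + ((-4 * c ^ 4 + c ^ 3 - 5 * c ^ 2 - c + 1) / D) * wz
        = (3 * c ^ 3 + 2 * c ^ 2 - c - 2 * (1 - c ^ 2) * Real.sqrt (c + 2 * c ^ 2))
            / (1 + c) ^ 2 ∧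
      (s * (c ^ 3 - 5 * c ^ 2 - c + 1) / D) * wx
        + (-(4 * s * c ^ 2 * Real.sqrt (2 * c + 1)) / D) * wy
        + (-(c * (c ^ 3 + 11 * c ^ 2 - c - 3)) / D) * wz = c := by
  intro r₁₀ c s D
  have c_pos : 0 < c := cos_tammesRadius_pos
  have c_sq_lt : c ^ 2 < 1 / 4 := cos_tammesRadius_sq_lt
  have c_cubic : 7 * c ^ 3 - 4 * c ^ 2 - 2 * c + 1 = 0 := cos_tammesRadius_cubic
  have s_ne_zero : s ≠ 0 := sin_tammesRadius_pos.ne'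
  have D_ne_zero : D ≠ 0 := (centerDenom_pos c_pos.le).ne'
  have q_sq : √(2 * c + 1) ^ 2 = 2 * c + 1 := sq_sqrt (by positivity)
  have q_ne_zero : √(2 * c + 1) ≠ 0 := by positivity
  rw [cos_side₆₁₀_eq (by linarith) c_cubic]
  let w := center₁₀ c s √(2 * c + 1)
  refine ⟨w 0, w 1, w 2, ?_, ?_, ?_, ?_⟩
  · simpa only [Matrix.vec3_dotProduct, ← sq] using
      center₁₀_dotProduct_self s_ne_zero (sin_sq r₁₀) q_ne_zero q_sq c_cubic
  · exact (Matrix.vec3_dotProduct _ _).symm.trans (center₃_dotProduct_center₁₀ s_ne_zero c_cubic)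
  · exact (Matrix.vec3_dotProduct _ _).symm.trans
      (center₆_dotProduct_center₁₀ s_ne_zero q_ne_zero D_ne_zero c_cubic)
  · exact (Matrix.vec3_dotProduct _ _).symm.trans
      (center₇_dotProduct_center₁₀ s_ne_zero q_ne_zero D_ne_zero c_cubic)
end
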